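/- arXiv:2505.01803 — 3 statements merged into one kernel-verified Lean document; each statement's English description precedes it below -/
import Mathlib

section
/- Let N ≥ 1, let λ > 0, let ψ : ℝ^N → ℝ satisfy: ψ(u) = Σ_{i=1}^N ψ_i(u_i) for functions ψ_i : ℝ → ℝ with ψ_i(0) = ψ_i(1) = 0 and ψ_i(s) > 0 for all s ∈ (0,1). Let ρ_1, …, ρ_N ∈ ℝ satisfy ρ_1 = ρ_2 = ⋯ = ρ_m > ρ_{m+1} ≥ ⋯ ≥ ρ_N for some m ∈ {1,…,N}. Then any maximizer u* over the set U = {u ∈ ℝ^N : u_i ∈ [0,1] for all i, Σ_{i=1}^N u_i = 1} of the function f(u) = Σ_{i=1}^N (ρ_i u_i − λ ψ_i(u_i)) satisfies u* ∈ {e_1, …, e_m}, where e_i denotes the i-th canonical basis vector of ℝ^N. -/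
/-!
Write `c` for the common largest value of `ρ`. On the simplex each summand satisfies
`ρ i * u i - lam * ψi i (u i) ≤ c * u i`, and the right-hand sides sum to `c`, the value of the
objective at the first basis vector. A maximizer therefore attains equality in every summand.
Equality rules out coordinates in `(0, 1)`, where the penalty is positive, and coordinates
equal to `1` outside the top block, where `ρ i < c`. Since the coordinates sum to `1`, exactly
one of them is `1`, and its index lies in the top block.
-/

/-- Lemma 1 (discreteness of maximizers over the simplex).
Under Assumption 1 on `ψ` (additively separable into `ψi` with `ψi 0 = ψi 1 = 0` and
`ψi > 0` on `(0,1)`), if `ρ_1 = ⋯ = ρ_m > ρ_{m+1} ≥ ⋯ ≥ ρ_N`, then any maximizer over the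
standard simplex `U` of `f u = ∑ i (ρ i * u i - λ * ψi i (u i))` is a canonical basis
vector `e_i` with `i ≤ m`. -/
theorem stmt_0 (N : ℕ) (hN : 1 ≤ N) (lam : ℝ) (hlam : 0 < lam)
    (ψ : (Fin N → ℝ) → ℝ) (ψi : Fin N → ℝ → ℝ)
    (hsep : ∀ u : Fin N → ℝ, ψ u = ∑ i, ψi i (u i))
    (hpsi0 : ∀ i, ψi i 0 = 0) (hpsi1 : ∀ i, ψi i 1 = 0)
    (hpsipos : ∀ i, ∀ s ∈ Set.Ioo (0:ℝ) 1, 0 < ψi i s)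
    (ρ : Fin N → ℝ) (m : ℕ) (hm1 : 1 ≤ m) (hmN : m ≤ N)
    (hblock : ∀ i : Fin N, (i : ℕ) < m → ρ i = ρ ⟨0, hN⟩)
    (htail : ∀ i : Fin N, m ≤ (i : ℕ) → ρ i < ρ ⟨0, hN⟩)
    (hanti : ∀ i j : Fin N, m ≤ (i : ℕ) → i ≤ j → ρ j ≤ ρ i)
    (U : Set (Fin N → ℝ))
    (hU : U = {u : Fin N → ℝ | (∀ i, u i ∈ Set.Icc (0:ℝ) 1) ∧ ∑ i, u i = 1})
    (ustar : Fin N → ℝ) (hmem : ustar ∈ U)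
    (hopt : ∀ u ∈ U,
      ∑ i, (ρ i * u i - lam * ψi i (u i)) ≤ ∑ i, (ρ i * ustar i - lam * ψi i (ustar i))) :
    ∃ i : Fin N, (i : ℕ) < m ∧ ustar = Pi.single i 1 := by
  subst hU
  obtain ⟨hIcc, hsum⟩ := hmem
  set c := ρ ⟨0, hN⟩ with hc
  have hρ : ∀ i, ρ i ≤ c := fun i => by
    rcases lt_or_ge (i : ℕ) m with h | h
    · exact (hblock i h).le
    · exact (htail i h).le
  have hψ : ∀ i, 0 ≤ ψi i (ustar i) := fun i => by
    rcases (hIcc i).1.eq_or_lt with h | h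
    · rw [← h, hpsi0]
    rcases (hIcc i).2.eq_or_lt with h' | h'
    · rw [h', hpsi1]
    exact (hpsipos i _ ⟨h, h'⟩).le
  have hterm : ∀ i ∈ Finset.univ,
      ρ i * ustar i - lam * ψi i (ustar i) ≤ c * ustar i := fun i _ => by
    have h1 := mul_le_mul_of_nonneg_right (hρ i) (hIcc i).1
    have h2 := mul_nonneg hlam.le (hψ i)
    linarith
  have hval : c ≤ ∑ i, (ρ i * ustar i - lam * ψi i (ustar i)) := by
    refine le_trans (le_of_eq ?_) (hopt (Pi.single ⟨0, hN⟩ 1) ⟨fun i => ?_, ?_⟩)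
    · rw [Finset.sum_eq_single ⟨0, hN⟩]
      · simp [hpsi1, hc]
      · intro i _ hi
        simp [hi, hpsi0]
      · simp
    · by_cases hi : i = ⟨0, hN⟩
      · subst hi
        simp
      · simp [hi]
    · simp
  have heq : ∀ i, ρ i * ustar i - lam * ψi i (ustar i) = c * ustar i := fun i =>
    (Finset.sum_eq_sum_iff_of_le hterm).1
      (le_antisymm (Finset.sum_le_sum hterm) (by rwa [← Finset.mul_sum, hsum, mul_one]))
      i (Finset.mem_univ i)
  have hone : ∀ i, ustar i ≠ 0 → ustar i = 1 := fun i h0 => by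
    by_contra h1
    have hpos := mul_pos hlam (hpsipos i _
      ⟨lt_of_le_of_ne (hIcc i).1 (Ne.symm h0), lt_of_le_of_ne (hIcc i).2 h1⟩)
    have := mul_le_mul_of_nonneg_right (hρ i) (hIcc i).1
    linarith [heq i]
  obtain ⟨i, -, hi⟩ := Finset.exists_ne_zero_of_sum_ne_zero (hsum.trans_ne one_ne_zero)
  have hi1 := hone i hi
  refine ⟨i, ?_, ?_⟩
  · by_contra! hm
    have h := heq i
    rw [hi1, hpsi1] at h
    linarith [htail i hm]
  · ext j
    by_cases hj : j = i
    · subst hj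
      simpa using hi1
    · rw [Pi.single_eq_of_ne hj]
      have h := Finset.add_sum_erase Finset.univ ustar (Finset.mem_univ i)
      have hle := Finset.single_le_sum (f := ustar) (fun k _ => (hIcc k).1)
        (Finset.mem_erase.2 ⟨hj, Finset.mem_univ j⟩)
      linarith [(hIcc j).1]
end

section
/- Let n, N ≥ 1, let A_1, …, A_N be real n×n matrices, T > 0, ξ ∈ ℝ^n, let Q be a symmetric positive definite n×n matrix, λ > 0, and let ψ : ℝ^N → ℝ satisfy Assumption 1. Call a pair (u, x) admissible if u : [0,T] → ℝ^N is measurable with u(t) ∈ U for almost all t ∈ [0,T], and x : [0,T] → ℝ^n is absolutely continuous with x(0) = ξ and x′(t) = Φ(x(t)) u(t) for almost all t. Suppose (u*, x*) is admissible and minimizes the cost J_λ(u) = x(T)ᵀ Q x(T) + λ ∫_0^T ψ(u(t)) dt over all admissible pairs, and suppose (as guaranteed by the maximum principle) there exists p : [0,T] → ℝ^n such that u*(t) maximizes Σ_{i=1}^N (p(t)ᵀ A_i x*(t) u_i − λ ψ_i(u_i)) over u ∈ U for almost every t. Then u*(t) is a one-hot vector, i.e., u*_i(t) ∈ {0,1}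 for all i and Σ_{i=1}^N u*_i(t) = 1, for almost all t ∈ [0,T]. -/
/-! The claim is pointwise in `t`. Write `c i = p(t)ᵀ A i x*(t)` and `u = u*(t)`. A regularizer
vanishing at `0` and `1` vanishes at the vertices of the simplex, so comparing `u` with the `j`-th
vertex gives `c j ≤ ∑ c i u i - λ ∑ ψ i (u i)`. Averaging these inequalities with the weights `u j`
yields `λ ∑ ψ i (u i) ≤ 0`. Every summand is nonnegative, hence zero, and positivity of `ψ i`
on `(0, 1)` forces `u i ∈ {0, 1}`. -/

open MeasureTheory Matrix

/-- A maximizer over the simplex of a linear form minus a separable penalty that vanishes at `0`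
and `1` and is positive in between is a vertex. -/
theorem mem_zero_one_of_isMax {N : ℕ} (c u : Fin N → ℝ) (lam : ℝ) (hlam : 0 < lam)
    (f : Fin N → ℝ → ℝ) (hf0 : ∀ i, f i 0 = 0) (hf1 : ∀ i, f i 1 = 0)
    (hfpos : ∀ i, ∀ s ∈ Set.Ioo (0 : ℝ) 1, 0 < f i s)
    (hu : ∀ i, u i ∈ Set.Icc (0 : ℝ) 1) (hsum : ∑ i, u i = 1)
    (hmax : ∀ v : Fin N → ℝ, (∀ i, v i ∈ Set.Icc (0 : ℝ) 1) → ∑ i, v i = 1 →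
      ∑ i, (c i * v i - lam * f i (v i)) ≤ ∑ i, (c i * u i - lam * f i (u i))) (i : Fin N) :
    u i ∈ ({0, 1} : Set ℝ) := by
  set M := ∑ i, (c i * u i - lam * f i (u i)) with hM
  have hvertex : ∀ j, c j ≤ M := by
    intro j
    have hfs : ∀ i, f i ((Pi.single j 1 : Fin N → ℝ) i) = 0 := by
      intro i
      rcases eq_or_ne i j with rfl | h
      · simp [hf1]
      · simp [h, hf0]
    have h := hmax (Pi.single j 1) (fun i => by
      rcases eq_or_ne i j with rfl | h <;> simp [*]) (by simp)
    simp only [hfs] at h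
    simpa [Pi.single_apply] using h
  have havg : ∑ j, c j * u j ≤ M := by
    calc ∑ j, c j * u j ≤ ∑ j, M * u j :=
          Finset.sum_le_sum fun j _ => mul_le_mul_of_nonneg_right (hvertex j) (hu j).1
      _ = M := by rw [← Finset.mul_sum, hsum, mul_one]
  rw [hM, Finset.sum_sub_distrib, ← Finset.mul_sum] at havg
  have hnonneg : ∀ i, 0 ≤ f i (u i) := by
    intro i
    rcases (hu i).1.eq_or_lt with h | h
    · rw [← h, hf0]
    rcases (hu i).2.eq_or_lt with h' | h'
    · rw [h', hf1]
    exact (hfpos i _ ⟨h, h'⟩).le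
  have hle : ∑ i, f i (u i) ≤ 0 := by
    by_contra! h
    linarith [mul_pos hlam h]
  have hi : f i (u i) ≤ 0 :=
    (Finset.single_le_sum (fun i _ => hnonneg i) (Finset.mem_univ i)).trans hle
  by_contra hne
  simp only [Set.mem_insert_iff, Set.mem_singleton_iff, not_or] at hne
  exact absurd (hfpos i _ ⟨lt_of_le_of_ne (hu i).1 (Ne.symm hne.1),
    lt_of_le_of_ne (hu i).2 hne.2⟩) hi.not_gt

/-- Lemma 2 (discreteness of optimal controls). For the relaxed optimal control problem,
any optimal admissible pair `(u*, x*)` satisfying the maximum principle (existence of an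
adjoint `p` such that `u*(t)` maximizes the Hamiltonian-type expression over the simplex
a.e.) has a one-hot control `u*(t)` for almost all `t ∈ [0,T]`. Absolute continuity of `x`
together with `x' = Φ(x)u` a.e. is encoded by the integral form
`x t = ξ + ∫_0^t Φ(x s) u s ds`. -/
theorem stmt_9 (n N : ℕ) (hn : 1 ≤ n) (hN : 1 ≤ N)
    (A : Fin N → Matrix (Fin n) (Fin n) ℝ) (T : ℝ) (hT : 0 < T)
    (ξ : Fin n → ℝ) (Q : Matrix (Fin n) (Fin n) ℝ)
    (hQsymm : Q.IsSymm) (hQpos : Q.PosDef)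
    (lam : ℝ) (hlam : 0 < lam)
    (ψ : (Fin N → ℝ) → ℝ) (ψi : Fin N → ℝ → ℝ)
    (hsep : ∀ u : Fin N → ℝ, ψ u = ∑ i, ψi i (u i))
    (hpsi0 : ∀ i, ψi i 0 = 0) (hpsi1 : ∀ i, ψi i 1 = 0)
    (hpsipos : ∀ i, ∀ s ∈ Set.Ioo (0:ℝ) 1, 0 < ψi i s)
    (U : Set (Fin N → ℝ))
    (hU : U = {u : Fin N → ℝ | (∀ i, u i ∈ Set.Icc (0:ℝ) 1) ∧ ∑ i, u i = 1})
    (ustar : ℝ → Fin N → ℝ) (xstar : ℝ → Fin n → ℝ)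
    -- (u*, x*) is admissible
    (hmeas : Measurable ustar)
    (huU : ∀ᵐ t ∂(volume.restrict (Set.Icc (0:ℝ) T)), ustar t ∈ U)
    (hx0 : xstar 0 = ξ)
    (hode : ∀ t ∈ Set.Icc (0:ℝ) T,
      xstar t = ξ + ∫ s in (0:ℝ)..t, ∑ i, ustar s i • ((A i) *ᵥ (xstar s)))
    -- (u*, x*) minimizes the regularized cost over admissible pairs
    (hmin : ∀ (u : ℝ → Fin N → ℝ) (x : ℝ → Fin n → ℝ),
      Measurable u →
      (∀ᵐ t ∂(volume.restrict (Set.Icc (0:ℝ) T)), u t ∈ U) →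
      x 0 = ξ →
      (∀ t ∈ Set.Icc (0:ℝ) T,
        x t = ξ + ∫ s in (0:ℝ)..t, ∑ i, u s i • ((A i) *ᵥ (x s))) →
      xstar T ⬝ᵥ (Q *ᵥ xstar T) + lam * ∫ t in (0:ℝ)..T, ψ (ustar t) ≤
        x T ⬝ᵥ (Q *ᵥ x T) + lam * ∫ t in (0:ℝ)..T, ψ (u t))
    -- the maximum principle: adjoint p along which u* maximizes the Hamiltonian term
    (p : ℝ → Fin n → ℝ)
    (hmax : ∀ᵐ t ∂(volume.restrict (Set.Icc (0:ℝ) T)), ∀ v ∈ U,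
      ∑ i, ((p t ⬝ᵥ ((A i) *ᵥ (xstar t))) * v i - lam * ψi i (v i)) ≤
      ∑ i, ((p t ⬝ᵥ ((A i) *ᵥ (xstar t))) * ustar t i - lam * ψi i (ustar t i))) :
    ∀ᵐ t ∂(volume.restrict (Set.Icc (0:ℝ) T)),
      (∀ i, ustar t i ∈ ({0, 1} : Set ℝ)) ∧ ∑ i, ustar t i = 1 := by
  subst hU
  filter_upwards [huU, hmax] with t hu hm
  exact ⟨mem_zero_one_of_isMax (fun i => p t ⬝ᵥ ((A i) *ᵥ (xstar t))) (ustar t) lam hlam ψi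
    hpsi0 hpsi1 hpsipos hu.1 hu.2 fun v hv hv1 => hm v ⟨hv, hv1⟩, hu.2⟩
end

section
/- Let n, N ≥ 1, let A_1, …, A_N be real n×n matrices, T > 0, ξ ∈ ℝ^n, let Q be a symmetric positive definite n×n matrix, λ > 0, and let ψ : ℝ^N → ℝ satisfy Assumption 1. Call a pair (u, x) relaxed-admissible if u : [0,T] → ℝ^N is measurable with u(t) ∈ U for almost all t, and x : [0,T] → ℝ^n is absolutely continuous with x(0) = ξ and x′(t) = Φ(x(t)) u(t) for almost all t; call it binary-admissible if additionally u(t) is one-hot for almost all t. Suppose (u*, x*) is relaxed-admissible, minimizes J_λ(u) = x(T)ᵀ Q x(T) + λ ∫_0^T ψ(u(t)) dt over relaxed-admissible pairs, and u*(t) is one-hot for almost all t. Suppose (v*, y*) is binary-admissible and minimizes J(v) = y(T)ᵀ Q y(T) over binary-admissible pairs. Then x*(T)ᵀ Q x*(T) = y*(T)ᵀ Q y*(T); that is, u* is also a minimizer of the original binary optimal control problem. -/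
open MeasureTheory Matrix

/-- A separable penalty vanishing at `0` and `1` in each coordinate costs nothing along a control
whose coordinates are almost everywhere in `{0, 1}`. -/
theorem integral_penalty_eq_zero {N : ℕ} {T : ℝ} (hT : 0 < T)
    {ψ : (Fin N → ℝ) → ℝ} {ψi : Fin N → ℝ → ℝ}
    (hsep : ∀ u : Fin N → ℝ, ψ u = ∑ i, ψi i (u i))
    (hpsi0 : ∀ i, ψi i 0 = 0) (hpsi1 : ∀ i, ψi i 1 = 0) {u : ℝ → Fin N → ℝ}
    (hu : ∀ᵐ t ∂(volume.restrict (Set.Icc (0:ℝ) T)),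
      (∀ i, u t i ∈ ({0, 1} : Set ℝ)) ∧ ∑ i, u t i = 1) :
    ∫ t in (0:ℝ)..T, ψ (u t) = 0 := by
  rw [intervalIntegral.integral_of_le hT.le, ← integral_Icc_eq_integral_Ioc]
  refine integral_eq_zero_of_ae ?_
  filter_upwards [hu] with t ht
  rw [hsep]
  refine Finset.sum_eq_zero fun i _ => ?_
  rcases ht.1 i with h | h
  · rw [h, hpsi0]
  · rw [Set.mem_singleton_iff.mp h, hpsi1]

/-- Theorem 1 (validity of the relaxation). If `(u*, x*)` solves the relaxed problem and
its optimal control is one-hot a.e., and `(v*, y*)` solves the original binary problem,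
then the terminal costs coincide: `x*(T)ᵀ Q x*(T) = y*(T)ᵀ Q y*(T)`; i.e. `u*` also solves
the original binary optimal control problem. Absolute continuity of the states together
with the dynamics a.e. is encoded by the integral form `x t = ξ + ∫_0^t Φ(x s) u s ds`. -/
theorem stmt_10 (n N : ℕ) (hn : 1 ≤ n) (hN : 1 ≤ N)
    (A : Fin N → Matrix (Fin n) (Fin n) ℝ) (T : ℝ) (hT : 0 < T)
    (ξ : Fin n → ℝ) (Q : Matrix (Fin n) (Fin n) ℝ)
    (hQsymm : Q.IsSymm) (hQpos : Q.PosDef)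
    (lam : ℝ) (hlam : 0 < lam)
    (ψ : (Fin N → ℝ) → ℝ) (ψi : Fin N → ℝ → ℝ)
    (hsep : ∀ u : Fin N → ℝ, ψ u = ∑ i, ψi i (u i))
    (hpsi0 : ∀ i, ψi i 0 = 0) (hpsi1 : ∀ i, ψi i 1 = 0)
    (hpsipos : ∀ i, ∀ s ∈ Set.Ioo (0:ℝ) 1, 0 < ψi i s)
    (U : Set (Fin N → ℝ))
    (hU : U = {u : Fin N → ℝ | (∀ i, u i ∈ Set.Icc (0:ℝ) 1) ∧ ∑ i, u i = 1})
    -- (u*, x*) is relaxed-admissible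
    (ustar : ℝ → Fin N → ℝ) (xstar : ℝ → Fin n → ℝ)
    (hmeas : Measurable ustar)
    (huU : ∀ᵐ t ∂(volume.restrict (Set.Icc (0:ℝ) T)), ustar t ∈ U)
    (hx0 : xstar 0 = ξ)
    (hode : ∀ t ∈ Set.Icc (0:ℝ) T,
      xstar t = ξ + ∫ s in (0:ℝ)..t, ∑ i, ustar s i • ((A i) *ᵥ (xstar s)))
    -- (u*, x*) minimizes the regularized cost over relaxed-admissible pairs
    (hmin : ∀ (u : ℝ → Fin N → ℝ) (x : ℝ → Fin n → ℝ),
      Measurable u →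
      (∀ᵐ t ∂(volume.restrict (Set.Icc (0:ℝ) T)), u t ∈ U) →
      x 0 = ξ →
      (∀ t ∈ Set.Icc (0:ℝ) T,
        x t = ξ + ∫ s in (0:ℝ)..t, ∑ i, u s i • ((A i) *ᵥ (x s))) →
      xstar T ⬝ᵥ (Q *ᵥ xstar T) + lam * ∫ t in (0:ℝ)..T, ψ (ustar t) ≤
        x T ⬝ᵥ (Q *ᵥ x T) + lam * ∫ t in (0:ℝ)..T, ψ (u t))
    -- u* is one-hot almost everywhere
    (honehot : ∀ᵐ t ∂(volume.restrict (Set.Icc (0:ℝ) T)),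
      (∀ i, ustar t i ∈ ({0, 1} : Set ℝ)) ∧ ∑ i, ustar t i = 1)
    -- (v*, y*) is binary-admissible
    (vstar : ℝ → Fin N → ℝ) (ystar : ℝ → Fin n → ℝ)
    (hmeasv : Measurable vstar)
    (hvU : ∀ᵐ t ∂(volume.restrict (Set.Icc (0:ℝ) T)), vstar t ∈ U)
    (hvonehot : ∀ᵐ t ∂(volume.restrict (Set.Icc (0:ℝ) T)),
      (∀ i, vstar t i ∈ ({0, 1} : Set ℝ)) ∧ ∑ i, vstar t i = 1)
    (hy0 : ystar 0 = ξ)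
    (hodev : ∀ t ∈ Set.Icc (0:ℝ) T,
      ystar t = ξ + ∫ s in (0:ℝ)..t, ∑ i, vstar s i • ((A i) *ᵥ (ystar s)))
    -- (v*, y*) minimizes the terminal cost over binary-admissible pairs
    (hminv : ∀ (v : ℝ → Fin N → ℝ) (y : ℝ → Fin n → ℝ),
      Measurable v →
      (∀ᵐ t ∂(volume.restrict (Set.Icc (0:ℝ) T)), v t ∈ U) →
      (∀ᵐ t ∂(volume.restrict (Set.Icc (0:ℝ) T)),
        (∀ i, v t i ∈ ({0, 1} : Set ℝ)) ∧ ∑ i, v t i = 1) →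
      y 0 = ξ →
      (∀ t ∈ Set.Icc (0:ℝ) T,
        y t = ξ + ∫ s in (0:ℝ)..t, ∑ i, v s i • ((A i) *ᵥ (y s))) →
      ystar T ⬝ᵥ (Q *ᵥ ystar T) ≤ y T ⬝ᵥ (Q *ᵥ y T)) :
    xstar T ⬝ᵥ (Q *ᵥ xstar T) = ystar T ⬝ᵥ (Q *ᵥ ystar T) := by
  have hu := integral_penalty_eq_zero hT hsep hpsi0 hpsi1 honehot
  have hv := integral_penalty_eq_zero hT hsep hpsi0 hpsi1 hvonehot
  -- The penalty vanishes along both controls, and each pair competes in the other's problem.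
  have h := hmin vstar ystar hmeasv hvU hy0 hodev
  rw [hu, hv, mul_zero, add_zero, add_zero] at h
  exact le_antisymm h (hminv ustar xstar hmeas huU honehot hx0 hode)
end
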